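/- arXiv:1806.06971 — 2 statements merged into one kernel-verified Lean document; each statement's English description precedes it below -/
import Mathlib

section
/- Let V¹ := {tv + V[t⁻¹] : v ∈ V} ⊆ V⊕ be the image in V⊕ of the set of elements of the form tv with v ∈ V. Then V¹ is an essential k[t⁻¹]-submodule of V⊕: every nonzero k[t⁻¹]-submodule U of V⊕ satisfies U ∩ V¹ ≠ 0. -/
open Finsupp

variable (k : Type*) [Field k] (V : Type*) [AddCommGroup V] [Module k V]

/-- Multiplication by `t^n` on `V[t,t⁻¹] := ℤ →₀ V` (writing `v = ∑ᵢ tⁱ vᵢ` as the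
finitely supported function `i ↦ vᵢ`). -/
noncomputable def shift (n : ℤ) : (ℤ →₀ V) ≃ₗ[k] (ℤ →₀ V) :=
  Finsupp.domLCongr (Equiv.addRight n)

/-- `V[t⁻¹] ⊆ V[t,t⁻¹]`: the elements with `vᵢ = 0` for `i > 0`. -/
def Vneg : Submodule k (ℤ →₀ V) where
  carrier := {v | ∀ i : ℤ, 0 < i → v i = 0}
  add_mem' := by
    intro a c ha hc i hi
    simp only [Set.mem_setOf_eq] at *
    simp [Finsupp.add_apply, ha i hi, hc i hi]
  zero_mem' := by intro i _; rfl
  smul_mem' := by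
    intro c x hx i hi
    simp only [Set.mem_setOf_eq] at *
    simp [Finsupp.smul_apply, hx i hi]

/-- Multiplication by `t⁻¹` descends to the quotient `V⊕ = V[t,t⁻¹]/V[t⁻¹]`,
making `V⊕` a module over `k[t⁻¹]`. -/
noncomputable def shiftQ : ((ℤ →₀ V) ⧸ Vneg k V) →ₗ[k] ((ℤ →₀ V) ⧸ Vneg k V) :=
  Submodule.mapQ (Vneg k V) (Vneg k V) (shift k V (-1)).toLinearMap (by
    intro v hv i hi
    have h : (shift k V (-1)).toLinearMap v i = v (i + 1) := by
      simp [shift, Finsupp.domLCongr_apply, Finsupp.equivMapDomain_apply]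
    rw [h]
    exact hv (i + 1) (by omega))

/-!
Multiplication by `t⁻¹` on `V⊕` is locally nilpotent, and its kernel is exactly `V¹`. A nonzero
submodule stable under a locally nilpotent endomorphism contains a nonzero vector of the kernel:
apply the endomorphism to a nonzero vector as often as possible before the result vanishes.
-/

section LocallyNilpotent

variable {R M : Type*} [Semiring R] [AddCommMonoid M] [Module R M]

theorem inf_ker_ne_bot_of_forall_exists_pow_apply_eq_zero {f : Module.End R M}
    {U : Submodule R M} (hU : U ∈ f.invtSubmodule) (hf : ∀ x ∈ U, ∃ n : ℕ, (f ^ n) x = 0)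
    (hne : U ≠ ⊥) : U ⊓ LinearMap.ker f ≠ ⊥ := by
  obtain ⟨x, hx, hx0⟩ := (Submodule.ne_bot_iff U).1 hne
  obtain ⟨n, hn, hn_succ⟩ :=
    Nat.exists_not_and_succ_of_not_zero_of_exists (p := fun n ↦ (f ^ n) x = 0) hx0 (hf x hx)
  have hmem : (f ^ n) x ∈ U := Module.End.pow_apply_mem_of_forall_mem n hU x hx
  have hker : f ((f ^ n) x) = 0 := by rwa [← Module.End.mul_apply, ← pow_succ']
  exact (Submodule.ne_bot_iff _).2 ⟨(f ^ n) x, ⟨hmem, hker⟩, hn⟩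

end LocallyNilpotent

section Shift

variable {k V}

theorem shift_apply (n : ℤ) (v : ℤ →₀ V) (i : ℤ) : shift k V n v i = v (i - n) := by
  simp [shift, sub_eq_add_neg]

theorem shift_shift (m n : ℤ) (v : ℤ →₀ V) :
    shift k V m (shift k V n v) = shift k V (m + n) v := by
  ext i
  simp only [shift_apply, sub_sub]

theorem shiftQ_mkQ (v : ℤ →₀ V) :
    shiftQ k V ((Vneg k V).mkQ v) = (Vneg k V).mkQ (shift k V (-1) v) :=
  rfl

theorem shiftQ_pow_mkQ (n : ℕ) (v : ℤ →₀ V) :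
    (shiftQ k V ^ n) ((Vneg k V).mkQ v) = (Vneg k V).mkQ (shift k V (-n) v) := by
  induction n with
  | zero =>
    have hshift : shift k V (-(0 : ℕ)) v = v := by
      ext i
      simp [shift_apply]
    rw [hshift, pow_zero, Module.End.one_apply]
  | succ n ih =>
    rw [pow_succ', Module.End.mul_apply, ih, shiftQ_mkQ, shift_shift]
    congr 3
    push_cast
    ring

theorem mkQ_Vneg_eq_mkQ_iff {v w : ℤ →₀ V} :
    (Vneg k V).mkQ v = (Vneg k V).mkQ w ↔ ∀ i : ℤ, 0 < i → v i = w i :=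
  (Submodule.Quotient.eq _).trans <| forall₂_congr fun _ _ ↦ sub_eq_zero

theorem shiftQ_pow_mkQ_eq_zero_iff {n : ℕ} {v : ℤ →₀ V} :
    (shiftQ k V ^ n) ((Vneg k V).mkQ v) = 0 ↔ ∀ i : ℤ, n < i → v i = 0 := by
  rw [shiftQ_pow_mkQ, ← map_zero (Vneg k V).mkQ, mkQ_Vneg_eq_mkQ_iff]
  simp only [shift_apply, sub_neg_eq_add, Finsupp.zero_apply]
  refine ⟨fun h i hi ↦ ?_, fun h i hi ↦ h (i + n) (by lia)⟩
  simpa using h (i - n) (by lia)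

theorem exists_shiftQ_pow_apply_eq_zero (x : (ℤ →₀ V) ⧸ Vneg k V) :
    ∃ n : ℕ, (shiftQ k V ^ n) x = 0 := by
  obtain ⟨v, rfl⟩ := (Vneg k V).mkQ_surjective x
  obtain ⟨N, hN⟩ := v.support.bddAbove
  refine ⟨N.toNat, shiftQ_pow_mkQ_eq_zero_iff.2 fun i hi ↦ ?_⟩
  by_contra hvi
  have : i ≤ N := hN (Finsupp.mem_support_iff.2 hvi)
  lia

end Shift

theorem ker_shiftQ :
    LinearMap.ker (shiftQ k V) = Submodule.map (Vneg k V).mkQ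
      (Submodule.map (Finsupp.lsingle (1 : ℤ) : V →ₗ[k] (ℤ →₀ V)) ⊤) := by
  ext x
  obtain ⟨v, rfl⟩ := (Vneg k V).mkQ_surjective x
  have hker : shiftQ k V ((Vneg k V).mkQ v) = 0 ↔ ∀ i : ℤ, 1 < i → v i = 0 := by
    simpa using shiftQ_pow_mkQ_eq_zero_iff (k := k) (n := 1) (v := v)
  simp only [LinearMap.mem_ker, hker, Submodule.mem_map, Submodule.mem_top, true_and,
    exists_exists_eq_and, Finsupp.lsingle_apply, mkQ_Vneg_eq_mkQ_iff]
  constructor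
  · intro h
    refine ⟨v 1, fun i hi ↦ ?_⟩
    obtain rfl | h1 : i = 1 ∨ 1 < i := by lia
    · exact Finsupp.single_eq_same
    · rw [h i h1, Finsupp.single_eq_of_ne h1.ne']
  · rintro ⟨w, hw⟩ i hi
    rw [← hw i (by lia), Finsupp.single_eq_of_ne hi.ne']

theorem stmt10_general
    (U : Submodule k ((ℤ →₀ V) ⧸ Vneg k V))
    (hstable : ∀ x ∈ U, shiftQ k V x ∈ U) (hne : U ≠ ⊥) :
    U ⊓ Submodule.map (Vneg k V).mkQ
        (Submodule.map (Finsupp.lsingle (1 : ℤ) : V →ₗ[k] (ℤ →₀ V)) ⊤) ≠ ⊥ := by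
  rw [← ker_shiftQ]
  exact inf_ker_ne_bot_of_forall_exists_pow_apply_eq_zero hstable
    (fun x _ ↦ exists_shiftQ_pow_apply_eq_zero x) hne

/-- The image `V¹` of `{tv : v ∈ V}` in `V⊕ = V[t,t⁻¹]/V[t⁻¹]` is an
essential `k[t⁻¹]`-submodule: every nonzero `k[t⁻¹]`-submodule (i.e. `k`-submodule
stable under multiplication by `t⁻¹`) meets it nontrivially. -/
theorem stmt10 [FiniteDimensional k V]
    (U : Submodule k ((ℤ →₀ V) ⧸ Vneg k V))
    (hstable : ∀ x ∈ U, shiftQ k V x ∈ U) (hne : U ≠ ⊥) :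
    U ⊓ Submodule.map (Vneg k V).mkQ
        (Submodule.map (Finsupp.lsingle (1 : ℤ) : V →ₗ[k] (ℤ →₀ V)) ⊤) ≠ ⊥ := by
  exact stmt10_general k V U hstable hne
end

section
/- The map Ω : PPU(b)⁻ → Sub(V⊕) is injective: if φ₁, φ₂ ∈ PPU(b)⁻ induce endomorphisms of V⊕ with equal kernels, then φ₁ = φ₂. -/
open Finsupp

variable (k : Type*) [Field k] (V : Type*) [AddCommGroup V] [Module k V]

/-- The coefficient of `tⁿ` of `b̃(v,w) = ∑ₙ tⁿ (∑ᵢ b(v_{i-n}, w_i))`. -/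
noncomputable def Btilde (b : LinearMap.BilinForm k V) (n : ℤ) (v w : ℤ →₀ V) : k :=
  w.sum fun i wi => b (v (i - n)) wi

/-- `φ` is a paraunitary transformation: an invertible `k[t,t⁻¹]`-linear
(i.e. `k`-linear and commuting with multiplication by `t`) endomorphism of
`V[t,t⁻¹]` preserving `b̃`. -/
def IsPU (b : LinearMap.BilinForm k V) (φ : (ℤ →₀ V) ≃ₗ[k] (ℤ →₀ V)) : Prop :=
  (∀ v, φ (shift k V 1 v) = shift k V 1 (φ v)) ∧
  ∀ (n : ℤ) (v w : ℤ →₀ V), Btilde k V b n (φ v) (φ w) = Btilde k V b n v w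

/-- The specialization `t = 1` of a `k[t,t⁻¹]`-linear endomorphism `f = ∑ᵢ tⁱ fᵢ`
of `V[t,t⁻¹]`, i.e. the endomorphism `ε₁(f) = ∑ᵢ fᵢ` of `V`. -/
noncomputable def eps (f : (ℤ →₀ V) →ₗ[k] (ℤ →₀ V)) : V →ₗ[k] V :=
  (Finsupp.lsum k fun _ : ℤ => (LinearMap.id : V →ₗ[k] V)) ∘ₗ f ∘ₗ Finsupp.lsingle 0

/-- `φ` is pure paraunitary: paraunitary and specializing to the identity at `t = 1`. -/
def IsPPU (b : LinearMap.BilinForm k V) (φ : (ℤ →₀ V) ≃ₗ[k] (ℤ →₀ V)) : Prop :=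
  IsPU k V b φ ∧ eps k V (φ : (ℤ →₀ V) →ₗ[k] (ℤ →₀ V)) = LinearMap.id

/-- `φ ∈ PPU(b)⁻`: pure paraunitary and all Laurent coefficients `φᵢ` for `i > 0` vanish. -/
def PPUneg (b : LinearMap.BilinForm k V) (φ : (ℤ →₀ V) ≃ₗ[k] (ℤ →₀ V)) : Prop :=
  IsPPU k V b φ ∧ ∀ (x : V) (i : ℤ), 0 < i → φ (Finsupp.single 0 x) i = 0

/-!
The element `χ = ψ ∘ φ⁻¹` is again pure paraunitary, and equality of the two kernels says that `χ`
and `χ⁻¹` both preserve `V[t⁻¹]`. The inverse of a paraunitary transformation is its adjoint, which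
has coefficients `(χ⁻¹)ₙ = (χ₋ₙ)*`. As `χ⁻¹` has no positive coefficients, `χ` has no negative ones,
so `χ` is constant in `t`, and its constant value is `ε₁(χ) = 1`.
-/

section

variable {V}

/-- Evaluation `V[t,t⁻¹] → V`, `∑ᵢ tⁱ vᵢ ↦ ∑ᵢ vᵢ` at `t = 1`; pure paraunitary transformations
are the paraunitary ones that preserve it. -/
noncomputable def evalOne : (ℤ →₀ V) →ₗ[k] V :=
  lsum k fun _ : ℤ => LinearMap.id

variable {k}

@[simp]
theorem shift_single (n m : ℤ) (x : V) : shift k V n (single m x) = single (m + n) x := by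
  simp [shift, domLCongr_apply, domCongr_apply]

@[simp]
theorem evalOne_single (n : ℤ) (x : V) : evalOne k (single n x) = x := by
  simp [evalOne]

theorem evalOne_shift (n : ℤ) (v : ℤ →₀ V) :
    evalOne k (shift k V n v) = evalOne k v := by
  induction v using Finsupp.induction_linear with
  | zero => simp only [map_zero]
  | add v w hv hw => simp only [map_add, hv, hw]
  | single m x => simp only [shift_single, evalOne_single]

theorem linearMap_ext_of_semiconj_shift {W : Type*} [AddCommMonoid W] [Module k W]
    {f g : (ℤ →₀ V) →ₗ[k] W} {S : W → W} (hS : Function.Injective S)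
    (hf : Function.Semiconj f (shift k V 1) S) (hg : Function.Semiconj g (shift k V 1) S)
    (hconst : ∀ x, f (single 0 x) = g (single 0 x)) : f = g := by
  refine lhom_ext fun n x => ?_
  induction n using Int.induction_on with
  | zero => exact hconst x
  | succ i ih => rw [← shift_single (k := k), hf, hg, ih]
  | pred i ih =>
    apply hS
    rw [← hf, ← hg, shift_single, sub_add_cancel, ih]

theorem evalOne_apply_of_commute_shift {f : (ℤ →₀ V) →ₗ[k] (ℤ →₀ V)}
    (hf : Function.Commute f (shift k V 1)) (v : ℤ →₀ V) :
    evalOne k (f v) = eps k V f (evalOne k v) := by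
  have comp_eq : evalOne k ∘ₗ f = eps k V f ∘ₗ evalOne k := by
    refine linearMap_ext_of_semiconj_shift Function.injective_id (fun v => ?_) (fun v => ?_)
      fun x => ?_
    · exact (congrArg (evalOne k) (hf v)).trans (evalOne_shift 1 (f v))
    · exact congrArg (eps k V f) (evalOne_shift 1 v)
    · rw [LinearMap.comp_apply, LinearMap.comp_apply, evalOne_single]
      rfl
  exact LinearMap.congr_fun comp_eq v

theorem single_mem_vneg {n : ℤ} (hn : n ≤ 0) (x : V) : single n x ∈ Vneg k V :=
  fun _ hi => single_eq_of_ne (hn.trans_lt hi).ne'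

section Btilde

variable (b : LinearMap.BilinForm k V)

theorem btilde_single_right (n i : ℤ) (v : ℤ →₀ V) (y : V) :
    Btilde k V b n v (single i y) = b (v (i - n)) y := by
  simp [Btilde]

theorem btilde_single_left (n i : ℤ) (x : V) (w : ℤ →₀ V) :
    Btilde k V b n (single i x) w = b x (w (i + n)) := by
  rw [Btilde, Finsupp.sum, Finset.sum_eq_single (i + n)]
  · simp
  · intro j _ hj
    rw [single_eq_of_ne (by omega), map_zero, LinearMap.zero_apply]
  · intro hi
    rw [notMem_support_iff.mp hi, map_zero]

end Btilde

variable {b : LinearMap.BilinForm k V} {φ ψ : (ℤ →₀ V) ≃ₗ[k] (ℤ →₀ V)}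

namespace IsPU

theorem trans (hφ : IsPU k V b φ) (hψ : IsPU k V b ψ) : IsPU k V b (φ.trans ψ) :=
  ⟨fun v => by simp only [LinearEquiv.trans_apply, hφ.1, hψ.1],
    fun n v w => by simp only [LinearEquiv.trans_apply, hφ.2, hψ.2]⟩

theorem symm (hφ : IsPU k V b φ) : IsPU k V b φ.symm :=
  ⟨fun v => by rw [φ.symm_apply_eq, hφ.1, φ.apply_symm_apply],
    fun n v w => by rw [← hφ.2, φ.apply_symm_apply, φ.apply_symm_apply]⟩

theorem btilde_apply_left (hφ : IsPU k V b φ) (n : ℤ) (v w : ℤ →₀ V) :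
    Btilde k V b n (φ v) w = Btilde k V b n v (φ.symm w) := by
  rw [← hφ.2 n v, φ.apply_symm_apply]

theorem bilin_coeff_neg_left (hφ : IsPU k V b φ) (n : ℤ) (x y : V) :
    b (φ (single 0 x) (-n)) y = b x (φ.symm (single 0 y) n) := by
  simpa only [btilde_single_right, btilde_single_left, zero_sub, zero_add] using
    hφ.btilde_apply_left n (single 0 x) (single 0 y)

theorem apply_single_zero_eq_single (hφ : IsPU k V b φ) (haniso : ∀ v, b v v = 0 → v = 0)
    (hmem_symm : ∀ x, φ.symm (single 0 x) ∈ Vneg k V) {x : V} (hx : φ (single 0 x) ∈ Vneg k V) :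
    φ (single 0 x) = single 0 (φ (single 0 x) 0) := by
  have coeff_neg : ∀ n : ℤ, 0 < n → φ (single 0 x) (-n) = 0 := fun n hn =>
    haniso _ <| by rw [hφ.bilin_coeff_neg_left, hmem_symm _ n hn, map_zero]
  ext i
  rcases lt_trichotomy i 0 with hi | rfl | hi
  · rw [single_eq_of_ne hi.ne, ← neg_neg i, coeff_neg _ (neg_pos.mpr hi)]
  · rw [single_eq_same]
  · rw [single_eq_of_ne hi.ne', hx i hi]

end IsPU

namespace IsPPU

theorem evalOne_apply (hφ : IsPPU k V b φ) (v : ℤ →₀ V) :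
    evalOne k (φ v) = evalOne k v :=
  (evalOne_apply_of_commute_shift hφ.1.1 v).trans (LinearMap.congr_fun hφ.2 _)

theorem of_evalOne_apply (hφ : IsPU k V b φ)
    (heval : ∀ v, evalOne k (φ v) = evalOne k v) : IsPPU k V b φ :=
  ⟨hφ, LinearMap.ext fun x => (heval _).trans (evalOne_single 0 x)⟩

theorem trans (hφ : IsPPU k V b φ) (hψ : IsPPU k V b ψ) : IsPPU k V b (φ.trans ψ) :=
  of_evalOne_apply (hφ.1.trans hψ.1) fun v => (hψ.evalOne_apply _).trans (hφ.evalOne_apply v)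

theorem symm (hφ : IsPPU k V b φ) : IsPPU k V b φ.symm :=
  of_evalOne_apply hφ.1.symm fun v => by rw [← hφ.evalOne_apply, φ.apply_symm_apply]

theorem eq_refl (hφ : IsPPU k V b φ) (haniso : ∀ v, b v v = 0 → v = 0)
    (hmem : ∀ x, φ (single 0 x) ∈ Vneg k V) (hmem_symm : ∀ x, φ.symm (single 0 x) ∈ Vneg k V) :
    φ = LinearEquiv.refl k (ℤ →₀ V) := by
  apply LinearEquiv.toLinearMap_injective
  refine linearMap_ext_of_semiconj_shift (shift k V 1).injective hφ.1.1 (fun _ => rfl) fun x => ?_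
  have const := hφ.1.apply_single_zero_eq_single haniso hmem_symm (hmem x)
  have coeff_zero : φ (single 0 x) 0 = x := by
    rw [← evalOne_single (k := k) 0 (φ (single 0 x) 0), ← const, hφ.evalOne_apply, evalOne_single]
  exact const.trans (congrArg (single 0) coeff_zero)

end IsPPU

theorem stmt13_general (haniso : ∀ v : V, b v v = 0 → v = 0)
    (hφ : IsPPU k V b φ) (hψ : IsPPU k V b ψ)
    (h : ∀ v : ℤ →₀ V, φ v ∈ Vneg k V ↔ ψ v ∈ Vneg k V) : φ = ψ := by
  have mem (x : V) : ψ (φ.symm (single 0 x)) ∈ Vneg k V := by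
    rw [← h, φ.apply_symm_apply]
    exact single_mem_vneg le_rfl x
  have mem_symm (x : V) : φ (ψ.symm (single 0 x)) ∈ Vneg k V := by
    rw [h, ψ.apply_symm_apply]
    exact single_mem_vneg le_rfl x
  have trans_eq_refl : φ.symm.trans ψ = LinearEquiv.refl k (ℤ →₀ V) :=
    (hφ.symm.trans hψ).eq_refl haniso mem mem_symm
  ext1 v
  simpa only [LinearEquiv.trans_apply, LinearEquiv.symm_apply_apply, LinearEquiv.refl_apply] using
    (LinearEquiv.congr_fun trans_eq_refl (φ v)).symm

end

/-- `Ω : PPU(b)⁻ → Sub(V⊕)` is injective: elements of `PPU(b)⁻`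
inducing endomorphisms of `V⊕` with the same kernel are equal. -/
theorem stmt13 [FiniteDimensional k V] (b : LinearMap.BilinForm k V)
    (hsymm : ∀ v w : V, b v w = b w v)
    (haniso : ∀ v : V, b v v = 0 → v = 0)
    (φ ψ : (ℤ →₀ V) ≃ₗ[k] (ℤ →₀ V)) (hφ : PPUneg k V b φ) (hψ : PPUneg k V b ψ)
    (h : ∀ v : ℤ →₀ V, φ v ∈ Vneg k V ↔ ψ v ∈ Vneg k V) :
    φ = ψ := by
  exact stmt13_general haniso hφ.1 hψ.1 h
end
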